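/- Let d ≥ 1, let T be a d-hypertree on [n] over F_2, and let Z be a (d-1)-cycle on [n]. Then there exists a unique subset F ⊆ T with ∂F = Z. -/

import Mathlib

open Finset symmDiff

/-- The vertex set `[n] = {1, …, n}`. -/
def rng (n : ℕ) : Finset ℕ := Finset.Icc 1 n

/-- The set of `d`-simplices (i.e. `(d+1)`-element subsets) on the vertex set `V`. -/
def simplices (V : Finset ℕ) (d : ℕ) : Finset (Finset ℕ) :=
  V.powerset.filter fun σ => σ.card = d + 1

/-- The mod-2 boundary of a set `X` of simplices: the set of faces `τ` of codimension one
(`|τ| + 1 = |σ|`) contained in an odd number of members of `X`. -/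
def bd (X : Finset (Finset ℕ)) : Finset (Finset ℕ) :=
  (X.biUnion fun σ => σ.powerset).filter
    fun τ => Odd (X.filter fun σ => τ ⊆ σ ∧ τ.card + 1 = σ.card).card

/-- A set of simplices is acyclic (a forest) over `F_2` if no nonempty subset has
empty boundary. -/
def IsAcyclic (F : Finset (Finset ℕ)) : Prop :=
  ∀ Y ⊆ F, Y ≠ ∅ → bd Y ≠ ∅

/-- A `d`-hypertree on `V`: a maximal acyclic set of `d`-simplices on `V`. -/
def IsHypertreeOn (V : Finset ℕ) (d : ℕ) (T : Finset (Finset ℕ)) : Prop :=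
  T ⊆ simplices V d ∧ IsAcyclic T ∧
    ∀ G, T ⊆ G → G ⊆ simplices V d → IsAcyclic G → G = T

/-- A simple cycle over `F_2`: a nonempty set with empty boundary, no nonempty proper
subset of which has empty boundary. -/
def IsSimpleCycle (Z : Finset (Finset ℕ)) : Prop :=
  Z ≠ ∅ ∧ bd Z = ∅ ∧ ∀ Y ⊂ Z, Y ≠ ∅ → bd Y ≠ ∅

/-- Collapsibility: `X` can be reduced to `∅` by repeatedly removing a simplex `σ ∈ X`
containing a codimension-one face contained in no other current member of `X`. -/
inductive Collapsible : Finset (Finset ℕ) → Prop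
  | empty : Collapsible ∅
  | step (X : Finset (Finset ℕ)) (σ τ : Finset ℕ) (hσ : σ ∈ X) (hτ : τ ⊆ σ)
      (hcard : τ.card + 1 = σ.card) (huniq : ∀ σ' ∈ X, τ ⊆ σ' → σ' = σ)
      (h : Collapsible (X.erase σ)) : Collapsible X

/-- The cone over `X` with apex `v`. -/
def cone (v : ℕ) (X : Finset (Finset ℕ)) : Finset (Finset ℕ) :=
  X.image (insert v)

/-- The link of the vertex `v` in `X`. -/
def link (v : ℕ) (X : Finset (Finset ℕ)) : Finset (Finset ℕ) :=
  (X.filter fun σ => v ∈ σ).image fun σ => σ.erase v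

/-- `fill Z T`: the subset `F ⊆ T` with `∂F = Z` (when it exists; it is unique when `T`
is a hypertree and `Z` a cycle). -/
noncomputable def fill (Z T : Finset (Finset ℕ)) : Finset (Finset ℕ) :=
  if h : ∃ F, F ⊆ T ∧ bd F = Z then h.choose else ∅

/-- The average filling-volume `μ(T)` of a `d`-hypertree `T` on `[n]`. -/
noncomputable def fillVolAvg (n d : ℕ) (T : Finset (Finset ℕ)) : ℝ :=
  (∑ σ ∈ simplices (rng n) d, ((fill (bd {σ}) T).card : ℝ)) / (n.choose (d + 1) : ℝ)

open Classical in
/-- The cut of `τ` in `T`: the set of `d`-simplices `σ` on `[n]` such that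
`T ⊕ {τ} ⊕ {σ}` is a `d`-hypertree on `[n]`. -/
noncomputable def cut (n d : ℕ) (τ : Finset ℕ) (T : Finset (Finset ℕ)) : Finset (Finset ℕ) :=
  (simplices (rng n) d).filter fun σ => IsHypertreeOn (rng n) d ((T ∆ {τ}) ∆ {σ})


lemma mem_bd_iff (X : Finset (Finset ℕ)) (τ : Finset ℕ) :
    τ ∈ bd X ↔ Odd (X.filter fun σ => τ ⊆ σ ∧ τ.card + 1 = σ.card).card := by
  unfold bd
  rw [mem_filter, and_iff_right_iff_imp]
  intro h
  obtain ⟨σ, hσ⟩ := card_pos.mp h.pos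
  simp only [mem_filter] at hσ
  exact mem_biUnion.mpr ⟨σ, hσ.1, mem_powerset.mpr hσ.2.1⟩

lemma odd_card_symmDiff (A B : Finset (Finset ℕ)) :
    Odd (A ∆ B).card ↔ (Odd A.card ∧ ¬ Odd B.card ∨ Odd B.card ∧ ¬ Odd A.card) := by
  have h1 : (A ∆ B).card = (A \ B).card + (B \ A).card := by
    rw [symmDiff_def, sup_eq_union, card_union_of_disjoint disjoint_sdiff_sdiff]
  have h2 := card_sdiff_add_card_inter A B
  have h3 := card_sdiff_add_card_inter B A
  rw [inter_comm] at h3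
  simp only [Nat.odd_iff]
  omega

lemma bd_symmDiff (X Y : Finset (Finset ℕ)) : bd (X ∆ Y) = bd X ∆ bd Y := by
  ext τ
  have h : ((X ∆ Y).filter fun σ => τ ⊆ σ ∧ τ.card + 1 = σ.card) =
      (X.filter fun σ => τ ⊆ σ ∧ τ.card + 1 = σ.card) ∆
      (Y.filter fun σ => τ ⊆ σ ∧ τ.card + 1 = σ.card) := by
    ext σ
    simp only [mem_filter, mem_symmDiff]
    tauto
  rw [mem_bd_iff, h, odd_card_symmDiff, mem_symmDiff, mem_bd_iff, mem_bd_iff]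

lemma bd_empty' : bd ∅ = ∅ := by
  ext τ
  simp [mem_bd_iff]

lemma bd_cone_eq (Z : Finset (Finset ℕ)) (hZ : bd Z = ∅) (v : ℕ) :
    bd (cone v (Z.filter fun σ => v ∉ σ)) = Z := by
  ext τ
  rw [mem_bd_iff]
  have hcard : ((cone v (Z.filter fun σ => v ∉ σ)).filter
      fun σ => τ ⊆ σ ∧ τ.card + 1 = σ.card).card =
      (Z.filter fun σ => v ∉ σ ∧ τ ⊆ insert v σ ∧ τ.card = σ.card).card := by
    symm
    apply card_bij (fun σ _ => insert v σ)
    · intro σ hσ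
      simp only [mem_filter] at hσ
      obtain ⟨h1, h2, h3, h4⟩ := hσ
      rw [mem_filter, cone, mem_image]
      refine ⟨⟨σ, mem_filter.mpr ⟨h1, h2⟩, rfl⟩, h3, ?_⟩
      rw [card_insert_of_notMem h2, h4]
    · intro a ha b hb hab
      simp only [mem_filter] at ha hb
      rw [← erase_insert ha.2.1, ← erase_insert hb.2.1, hab]
    · intro ρ hρ
      rw [mem_filter, cone, mem_image] at hρ
      obtain ⟨⟨σ, hσ, rfl⟩, h3, h4⟩ := hρ
      rw [mem_filter] at hσ
      rw [card_insert_of_notMem hσ.2] at h4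
      exact ⟨σ, mem_filter.mpr ⟨hσ.1, hσ.2, h3, by omega⟩, rfl⟩
  rw [hcard]
  by_cases hv : v ∈ τ
  · have hev : ¬ (τ.erase v) ∈ bd Z := by simp [hZ]
    rw [mem_bd_iff] at hev
    have hτ : 0 < τ.card := card_pos.mpr ⟨v, hv⟩
    have hce : (τ.erase v).card + 1 = τ.card := by rw [card_erase_of_mem hv]; omega
    have hs := card_filter_add_card_filter_not
      (s := Z.filter fun σ => τ.erase v ⊆ σ ∧ (τ.erase v).card + 1 = σ.card) (fun σ => v ∉ σ)
    have e1 : ((Z.filter fun σ => τ.erase v ⊆ σ ∧ (τ.erase v).card + 1 = σ.card).filter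
        fun σ => v ∉ σ) = Z.filter fun σ => v ∉ σ ∧ τ ⊆ insert v σ ∧ τ.card = σ.card := by
      ext σ
      simp only [mem_filter, hce, subset_insert_iff]
      tauto
    have e2 : ((Z.filter fun σ => τ.erase v ⊆ σ ∧ (τ.erase v).card + 1 = σ.card).filter
        fun σ => ¬ v ∉ σ) = Z.filter fun σ => σ = τ := by
      ext σ
      simp only [mem_filter, hce, not_not]
      constructor
      · rintro ⟨⟨h1, h2, h3⟩, h4⟩
        refine ⟨h1, (eq_of_subset_of_card_le ?_ h3.ge).symm⟩
        rw [← insert_erase hv]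
        exact insert_subset h4 h2
      · rintro ⟨h1, rfl⟩
        exact ⟨⟨h1, erase_subset _ _, rfl⟩, hv⟩
    rw [e1, e2, filter_eq'] at hs
    rw [Nat.odd_iff] at hev ⊢
    split_ifs at hs with h
    · rw [card_singleton] at hs
      simp only [h, iff_true]
      omega
    · rw [card_empty] at hs
      simp only [h, iff_false]
      omega
  · have e : (Z.filter fun σ => v ∉ σ ∧ τ ⊆ insert v σ ∧ τ.card = σ.card) =
        Z.filter fun σ => σ = τ := by
      apply filter_congr
      intro σ _
      rw [subset_insert_iff, erase_eq_of_notMem hv]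
      constructor
      · rintro ⟨_, h2, h3⟩
        exact (eq_of_subset_of_card_le h2 h3.ge).symm
      · rintro rfl
        exact ⟨hv, Subset.rfl, rfl⟩
    rw [e, filter_eq']
    split_ifs with h <;> simp [h]

lemma symmDiff_subset_of {A B T : Finset (Finset ℕ)} (hA : A ⊆ T) (hB : B ⊆ T) : A ∆ B ⊆ T := by
  intro x hx
  rw [mem_symmDiff] at hx
  rcases hx with h | h
  · exact hA h.1
  · exact hB h.1

lemma exists_fill_single {V : Finset ℕ} {d : ℕ} {T : Finset (Finset ℕ)}
    (hT : IsHypertreeOn V d T) {σ : Finset ℕ} (hσ : σ ∈ simplices V d) :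
    ∃ F ⊆ T, bd F = bd {σ} := by
  obtain ⟨h1, h2, h3⟩ := hT
  by_cases hm : σ ∈ T
  · exact ⟨{σ}, singleton_subset_iff.mpr hm, rfl⟩
  have hna : ¬ IsAcyclic (insert σ T) := fun h =>
    hm (h3 _ (subset_insert _ _) (insert_subset hσ h1) h ▸ mem_insert_self σ T)
  unfold IsAcyclic at hna
  push Not at hna
  obtain ⟨Y, hY, hne, hb⟩ := hna
  have hσY : σ ∈ Y := by
    by_contra h
    refine h2 Y (fun x hx => ?_) hne.ne_empty hb
    rcases mem_insert.mp (hY hx) with rfl | h'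
    · exact absurd hx h
    · exact h'
  refine ⟨Y ∆ {σ}, ?_, ?_⟩
  · intro x hx
    rw [mem_symmDiff, mem_singleton] at hx
    rcases hx with h | h
    · exact (mem_insert.mp (hY h.1)).resolve_left h.2
    · exact absurd (h.1 ▸ hσY) h.2
  · rw [bd_symmDiff, hb]
    exact bot_symmDiff _

lemma exists_fill_bd {V : Finset ℕ} {d : ℕ} {T : Finset (Finset ℕ)}
    (hT : IsHypertreeOn V d T) (X : Finset (Finset ℕ)) (hX : X ⊆ simplices V d) :
    ∃ F ⊆ T, bd F = bd X := by
  induction X using Finset.induction_on with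
  | empty => exact ⟨∅, empty_subset _, rfl⟩
  | insert a X ha ih =>
    obtain ⟨F, hF, hb⟩ := ih ((subset_insert _ _).trans hX)
    obtain ⟨G, hG, hc⟩ := exists_fill_single hT (hX (mem_insert_self a X))
    refine ⟨F ∆ G, symmDiff_subset_of hF hG, ?_⟩
    have : insert a X = X ∆ {a} := by
      ext x
      simp only [mem_insert, mem_symmDiff, mem_singleton]
      by_cases hx : x = a
      · subst hx; simp [ha]
      · simp [hx]
    rw [this, bd_symmDiff, bd_symmDiff, hb, hc]

/-- For `d ≥ 1`, a `d`-hypertree `T` on `[n]` and a `(d-1)`-cycle `Z` on `[n]`, there is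
a unique subset `F ⊆ T` with `∂F = Z`. -/
theorem existsUnique_fill (n d : ℕ) (hd : 1 ≤ d) (T : Finset (Finset ℕ))
    (hT : IsHypertreeOn (rng n) d T) (Z : Finset (Finset ℕ))
    (hZ : Z ⊆ simplices (rng n) (d - 1)) (hZcyc : bd Z = ∅) :
    ∃! F, F ⊆ T ∧ bd F = Z := by
  have hex : ∃ F ⊆ T, bd F = Z := by
    have hX : cone 1 (Z.filter fun σ => 1 ∉ σ) ⊆ simplices (rng n) d := by
      intro ρ hρ
      rw [cone, mem_image] at hρ
      obtain ⟨σ, hσ, rfl⟩ := hρ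
      rw [mem_filter] at hσ
      have h := hZ hσ.1
      rw [simplices, mem_filter, mem_powerset] at h ⊢
      have hc : σ.card = d := by omega
      obtain ⟨x, hx⟩ := card_pos.mp (by omega : 0 < σ.card)
      have hxn := h.1 hx
      rw [rng, mem_Icc] at hxn
      refine ⟨insert_subset ?_ h.1, ?_⟩
      · rw [rng, mem_Icc]; omega
      · rw [card_insert_of_notMem hσ.2, hc]
    obtain ⟨F, hF, hb⟩ := exists_fill_bd hT _ hX
    exact ⟨F, hF, hb.trans (bd_cone_eq Z hZcyc 1)⟩
  obtain ⟨F, hF, hb⟩ := hex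
  refine ⟨F, ⟨hF, hb⟩, ?_⟩
  rintro G ⟨hG, hc⟩
  by_contra hne
  refine hT.2.1 (G ∆ F) (symmDiff_subset_of hG hF) ?_ ?_
  · intro h
    exact hne (symmDiff_eq_bot.mp h)
  · rw [bd_symmDiff, hb, hc]
    exact symmDiff_self Z
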